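/- Let h : ℝ → ℝ, u : ℝ → ℝ², and x₀ ∈ ℝ. Assume: h is differentiable on a neighborhood of x₀ and its derivative h′ is differentiable at x₀ (so h″(x₀) exists); u is differentiable at x₀; the tangency condition u(x)·(1, h′(x)) = 0 holds for all x in a neighborhood of x₀; and u(x₀)·(h′(x₀), −1) ≠ 0. Then h″(x₀) = (1 + h′(x₀)²) · [u′(x₀)·(1, h′(x₀))] / [u(x₀)·(h′(x₀), −1)]. -/

import Mathlib

/-- Identity (2.29)/(2.66) of the paper: if the velocity trace `u` along the
graph of `h` is tangent to the graph, `u(x)·(1,h′(x)) = 0`, near `x₀`, and the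
Taylor-sign factor `u(x₀)·(h′(x₀),−1)` is nonzero, then
`h″(x₀) = (1 + h′(x₀)²)·[u′(x₀)·(1,h′(x₀))] / [u(x₀)·(h′(x₀),−1)]`. -/
theorem stmt3 (h h' : ℝ → ℝ) (h'' : ℝ) (u : ℝ → ℝ × ℝ) (u' : ℝ × ℝ) (x₀ : ℝ)
    (hderiv : ∀ᶠ x in nhds x₀, HasDerivAt h (h' x) x)
    (hderiv2 : HasDerivAt h' h'' x₀)
    (hu : HasDerivAt u u' x₀)
    (htan : ∀ᶠ x in nhds x₀, (u x).1 * 1 + (u x).2 * h' x = 0)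
    (hTaylor : (u x₀).1 * h' x₀ + (u x₀).2 * (-1) ≠ 0) :
    h'' = (1 + h' x₀ ^ 2) *
      ((u'.1 * 1 + u'.2 * h' x₀) / ((u x₀).1 * h' x₀ + (u x₀).2 * (-1))) := by
  have hu₁ : HasDerivAt (fun x => (u x).1) u'.1 x₀ := 
    (hasFDerivAt_fst (𝕜 := ℝ) (p := u x₀)).comp_hasDerivAt x₀ hu
  have hu₂ : HasDerivAt (fun x => (u x).2) u'.2 x₀ := 
    (hasFDerivAt_snd (𝕜 := ℝ) (p := u x₀)).comp_hasDerivAt x₀ hu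
  have hdiff : u'.1 * 1 + (u'.2 * h' x₀ + (u x₀).2 * h'') = 0 :=
    ((hu₁.mul_const 1).add (hu₂.mul hderiv2)).unique
      ((hasDerivAt_const x₀ (0 : ℝ)).congr_of_eventuallyEq htan)
  have htan₀ := htan.self_of_nhds
  rw [← mul_div_assoc, eq_div_iff hTaylor]
  linear_combination h'' * h' x₀ * htan₀ - (1 + h' x₀ ^ 2) * hdiff
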